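/- A majority dominated alternative cannot become the majority dominant alternative: if alternative a is dominated in the preferences of strictly more than n/2 of the agents in a profile P, then for no update order σ is a the MajDom-consensus alternative of MD_σ(P). -/

import Mathlib

attribute [local instance] Classical.propDecidable

noncomputable section

/-- A preference over the set of alternatives `A`: a binary relation. -/
abbrev Pref (A : Type) := A → A → Prop

/-- A preference is a strict partial order: irreflexive and transitive. -/
def IsPref {A : Type} (pref : Pref A) : Prop :=
  Irreflexive pref ∧ Transitive pref

variable {A : Type} [Fintype A] [DecidableEq A]

/-- The support `n_P(ab)`: the number of agents preferring `a` to `b` in profile `P`. -/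
def support {n : ℕ} (P : Fin n → Pref A) (a b : A) : ℕ :=
  (Finset.univ.filter fun i => P i a b).card

/-- An update order: a list of ordered pairs of distinct alternatives containing,
for each unordered pair `{a, b}` of distinct alternatives, exactly one of `ab` or `ba`,
each exactly once. -/
def IsUpdateOrder (σ : List (A × A)) : Prop :=
  (∀ p ∈ σ, p.1 ≠ p.2) ∧
  (∀ a b : A, a ≠ b → σ.count (a, b) + σ.count (b, a) = 1)

/-- One step of majority dynamics, discussing the pair `p`: agents already ranking
`p.1` versus `p.2` keep their preference; every other agent adds `p.1 ≻ p.2` if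
`n_P(p.1 p.2) ≥ n_P(p.2 p.1)` (ties broken in favour of the first alternative of the
pair), and otherwise adds `p.2 ≻ p.1`, then takes the transitive closure. -/
def mdStep {n : ℕ} (P : Fin n → Pref A) (p : A × A) : Fin n → Pref A :=
  fun i =>
    if P i p.1 p.2 ∨ P i p.2 p.1 then P i
    else if support P p.2 p.1 ≤ support P p.1 p.2 then
      Relation.TransGen (fun x y => P i x y ∨ (x = p.1 ∧ y = p.2))
    else
      Relation.TransGen (fun x y => P i x y ∨ (x = p.2 ∧ y = p.1))

/-- Majority dynamics `MD_σ(P)`: process the pairs of the update order `σ` in order. -/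
def MD {n : ℕ} (σ : List (A × A)) (P : Fin n → Pref A) : Fin n → Pref A :=
  σ.foldl mdStep P

/-- `a` is a Condorcet winner in `P`. -/
def CondorcetWinner {n : ℕ} (P : Fin n → Pref A) (a : A) : Prop :=
  ∀ b, b ≠ a → support P b a < support P a b

/-- `a` is a Condorcet loser in `P`. -/
def CondorcetLoser {n : ℕ} (P : Fin n → Pref A) (a : A) : Prop :=
  ∀ b, b ≠ a → support P a b < support P b a

/-- `a` is undominated in a preference. -/
def Undominated {A : Type} (pref : Pref A) (a : A) : Prop := ∀ b, ¬ pref b a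

/-- `a` is dominant in a preference. -/
def Dominant {A : Type} (pref : Pref A) (a : A) : Prop := ∀ b, b ≠ a → pref a b

/-- `a` is dominated (by every other alternative) in a preference. -/
def DominatedIn {A : Type} (pref : Pref A) (a : A) : Prop := ∀ b, b ≠ a → pref b a

/-- Number of preferences of `P` in which `a` is undominated. -/
def udCount {n : ℕ} (P : Fin n → Pref A) (a : A) : ℕ :=
  (Finset.univ.filter fun i => Undominated (P i) a).card

/-- Number of preferences of `P` in which `a` is dominant. -/
def domCount {n : ℕ} (P : Fin n → Pref A) (a : A) : ℕ :=
  (Finset.univ.filter fun i => Dominant (P i) a).card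

/-- Number of preferences of `P` in which `a` is dominated. -/
def domdCount {n : ℕ} (P : Fin n → Pref A) (a : A) : ℕ :=
  (Finset.univ.filter fun i => DominatedIn (P i) a).card

/-- `a` is undominated in at least one preference and no alternative is undominated
in strictly more preferences than `a`. -/
def PlurUDTop {n : ℕ} (P : Fin n → Pref A) (a : A) : Prop :=
  0 < udCount P a ∧ ∀ b, udCount P b ≤ udCount P a

/-- `a` is the PlurUD-consensus alternative of `P`. -/
def PlurUDConsensus {n : ℕ} (P : Fin n → Pref A) (a : A) : Prop :=
  PlurUDTop P a ∧ ∀ b, PlurUDTop P b → b = a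

/-- `a` is dominant in at least one preference and no alternative is dominant
in strictly more preferences than `a`. -/
def PlurDomTop {n : ℕ} (P : Fin n → Pref A) (a : A) : Prop :=
  0 < domCount P a ∧ ∀ b, domCount P b ≤ domCount P a

/-- `a` is the PlurDom-consensus alternative of `P`. -/
def PlurDomConsensus {n : ℕ} (P : Fin n → Pref A) (a : A) : Prop :=
  PlurDomTop P a ∧ ∀ b, PlurDomTop P b → b = a

/-- `a` is dominated in at least one preference and no alternative is dominated
in strictly more preferences than `a`. -/
def PlurDomdTop {n : ℕ} (P : Fin n → Pref A) (a : A) : Prop :=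
  0 < domdCount P a ∧ ∀ b, domdCount P b ≤ domdCount P a

/-- `a` is the (unique) plurality dominated alternative of `P`. -/
def PlurDomdConsensus {n : ℕ} (P : Fin n → Pref A) (a : A) : Prop :=
  PlurDomdTop P a ∧ ∀ b, PlurDomdTop P b → b = a

/-- `a` is the MajUD-consensus alternative of `P`: undominated in strictly more than
`n / 2` of the preferences, and the unique alternative with this property. -/
def MajUDConsensus {n : ℕ} (P : Fin n → Pref A) (a : A) : Prop :=
  (n < 2 * udCount P a) ∧ ∀ b, n < 2 * udCount P b → b = a

/-- `a` is the MajDom-consensus alternative of `P`: dominant in strictly more than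
`n / 2` of the preferences (such an alternative is automatically unique). -/
def MajDomConsensus {n : ℕ} (P : Fin n → Pref A) (a : A) : Prop :=
  n < 2 * domCount P a

/-- `a` is the UnanUD-consensus alternative of `P`: undominated in every preference,
and the unique alternative with this property. -/
def UnanUDConsensus {n : ℕ} (P : Fin n → Pref A) (a : A) : Prop :=
  (∀ i, Undominated (P i) a) ∧ ∀ b, (∀ i, Undominated (P i) b) → b = a

/-- `a` is the UnanDom-consensus alternative of `P`: dominant in every preference. -/
def UnanDomConsensus {n : ℕ} (P : Fin n → Pref A) (a : A) : Prop :=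
  ∀ i, Dominant (P i) a

/-- A preference is a strict weak ordering: there is an ordered partition of the
alternatives into levels (given by a level function `f`) such that alternatives in the
same level are incomparable, and `a ≻ b` exactly when `a` is in an earlier level. -/
def IsSWO (pref : Pref A) : Prop :=
  ∃ (k : ℕ) (f : A → Fin k), ∀ a b : A, pref a b ↔ f a < f b

/-!
Majority dynamics only ever adds comparisons, and each updated preference stays transitive and
antisymmetric: by transitivity, a cycle through a newly added `u ≻ v` would mean that `v ≻ u` was
held before, but an agent who already ranks `u` versus `v` adds nothing. So an agent who ranks `a`
last at the start cannot rank it first at the end, whereas two strict majorities share an agent.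
-/

section Development

variable {B : Type} {n : ℕ}

/-- Transitive antisymmetric relations: the common generalization of strict and non-strict
partial orders, preserved by every step of majority dynamics. Unlike `IsPref`, it
survives the update by a pair `(u, u)`. -/
structure IsTransAntisymm (R : Pref B) : Prop extends IsTrans B R, Std.Antisymm R

theorem IsPref.isTransAntisymm {R : Pref B} (hR : IsPref R) : IsTransAntisymm R where
  trans _ _ _ hxy hyz := hR.2 hxy hyz
  antisymm x _ hxy hyx := (hR.1 x (hR.2 hxy hyx)).elim

/-- The preference of an agent who ranks `u` above `v` in addition to the comparisons in `R`,
closed under transitivity. -/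
def addPair (R : Pref B) (u v : B) : Pref B :=
  Relation.TransGen fun x y => R x y ∨ (x = u ∧ y = v)

theorem le_addPair (R : Pref B) (u v : B) : R ≤ addPair R u v :=
  fun _ _ hxy => .single (.inl hxy)

theorem addPair_iff {R : Pref B} [IsTrans B R] {u v x y : B} :
    addPair R u v x y ↔ R x y ∨ ((x = u ∨ R x u) ∧ (y = v ∨ R v y)) := by
  constructor
  · intro h
    induction h with
    | single hxy => tauto
    | @tail y z _ hyz ih =>
      rcases hyz with hyz | ⟨rfl, rfl⟩
      · rcases ih with hxy | ⟨hxu, rfl | hvy⟩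
        · exact .inl (_root_.trans hxy hyz)
        · exact .inr ⟨hxu, .inr hyz⟩
        · exact .inr ⟨hxu, .inr (_root_.trans hvy hyz)⟩
      · tauto
  · have huv : addPair R u v u v := .single (.inr ⟨rfl, rfl⟩)
    rintro (hxy | ⟨rfl | hxu, rfl | hvy⟩)
    · exact le_addPair R u v _ _ hxy
    · exact huv
    · exact huv.tail (.inl hvy)
    · exact huv.head (.inl hxu)
    · exact (huv.head (.inl hxu)).tail (.inl hvy)

theorem IsTransAntisymm.addPair {R : Pref B} (hR : IsTransAntisymm R) {u v : B}
    (hvu : ¬ R v u) : IsTransAntisymm (addPair R u v) where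
  trans _ _ _ hxy hyz := Relation.TransGen.trans hxy hyz
  antisymm x y hxy hyx := by
    have := hR.toIsTrans
    have no_path {s t : B} (hvs : s = v ∨ R v s) (hst : R s t) (htu : t = u ∨ R t u) : False := by
      rcases hvs with rfl | hvs <;> rcases htu with rfl | htu
      · exact hvu hst
      · exact hvu (_root_.trans hst htu)
      · exact hvu (_root_.trans hvs hst)
      · exact hvu (_root_.trans hvs (_root_.trans hst htu))
    have eq_of_between {s : B} (hsu : s = u ∨ R s u) (hvs : s = v ∨ R v s) : s = u :=
      hsu.resolve_right fun hsu => no_path hvs hsu (.inl rfl)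
    rcases addPair_iff.1 hxy with hxy | ⟨hxu, hvy⟩ <;>
      rcases addPair_iff.1 hyx with hyx | ⟨hyu, hvx⟩
    · exact hR.antisymm x y hxy hyx
    · exact (no_path hvx hxy hyu).elim
    · exact (no_path hvy hyx hxu).elim
    · exact (eq_of_between hxu hvx).trans (eq_of_between hyu hvy).symm

theorem mdStep_eq_or_exists_addPair (P : Fin n → Pref B) (p : B × B) (i : Fin n) :
    mdStep P p i = P i ∨ ∃ u v, ¬ P i v u ∧ mdStep P p i = addPair (P i) u v := by
  unfold mdStep
  split_ifs with hranked
  · exact .inl rfl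
  · exact .inr ⟨p.1, p.2, fun h => hranked (.inr h), rfl⟩
  · exact .inr ⟨p.2, p.1, fun h => hranked (.inl h), rfl⟩

theorem le_mdStep (P : Fin n → Pref B) (p : B × B) : P ≤ mdStep P p := by
  intro i
  rcases mdStep_eq_or_exists_addPair P p i with h | ⟨u, v, -, h⟩ <;> rw [h]
  exact le_addPair _ u v

theorem isTransAntisymm_mdStep {P : Fin n → Pref B} {i : Fin n} (hP : IsTransAntisymm (P i))
    (p : B × B) : IsTransAntisymm (mdStep P p i) := by
  rcases mdStep_eq_or_exists_addPair P p i with h | ⟨u, v, hvu, h⟩ <;> rw [h]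
  · exact hP
  · exact hP.addPair hvu

theorem le_MD (σ : List (B × B)) (P : Fin n → Pref B) : P ≤ MD σ P :=
  List.foldlRecOn σ mdStep le_rfl fun Q hPQ p _ => hPQ.trans (le_mdStep Q p)

theorem isTransAntisymm_MD (σ : List (B × B)) {P : Fin n → Pref B} {i : Fin n}
    (hP : IsTransAntisymm (P i)) : IsTransAntisymm (MD σ P i) :=
  List.foldlRecOn (motive := fun Q : Fin n → Pref B => IsTransAntisymm (Q i)) σ mdStep hP
    fun _ hQ p _ => isTransAntisymm_mdStep hQ p

theorem DominatedIn.mono {R S : Pref B} {a : B} (hRS : R ≤ S) (ha : DominatedIn R a) :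
    DominatedIn S a :=
  fun b hb => hRS b a (ha b hb)

theorem DominatedIn.not_dominant [Nontrivial B] {R : Pref B} [Std.Antisymm R] {a : B}
    (ha : DominatedIn R a) : ¬ Dominant R a := by
  intro hdom
  obtain ⟨b, hb⟩ := exists_ne a
  exact hb (antisymm (ha b hb) (hdom b hb))

theorem stmt_11_general [Nontrivial B] (P : Fin n → Pref B) (hP : ∀ i, IsTransAntisymm (P i))
    (a : B) (σ : List (B × B)) : domdCount P a + domCount (MD σ P) a ≤ n := by
  have hdisj : Disjoint (Finset.univ.filter fun i => DominatedIn (P i) a)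
      (Finset.univ.filter fun i => Dominant (MD σ P i) a) := by
    refine Finset.disjoint_filter.2 fun i _ hdomd => ?_
    have := (isTransAntisymm_MD σ (hP i)).toAntisymm
    exact (hdomd.mono (le_MD σ P i)).not_dominant
  unfold domdCount domCount
  rw [← Finset.card_union_of_disjoint hdisj]
  exact card_finset_fin_le _

end Development

/-- A majority dominated alternative cannot become the MajDom-consensus
alternative (recall the model fixes `m ≥ 3` alternatives). -/
theorem stmt_11 (hA : 3 ≤ Fintype.card A) {n : ℕ}
    (P : Fin n → Pref A) (hP : ∀ i, IsPref (P i))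
    (a : A) (ha : n < 2 * domdCount P a)
    (σ : List (A × A)) (hσ : IsUpdateOrder σ) :
    ¬ MajDomConsensus (MD σ P) a := by
  have : Nontrivial A := Fintype.one_lt_card_iff_nontrivial.1 (by omega)
  have hcount := stmt_11_general P (fun i => (hP i).isTransAntisymm) a σ
  unfold MajDomConsensus
  omega

end
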